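/- Let Φ be a positive linear map from n×n to m×m complex matrices, let f : ℝ → ℝ be operator monotone on [0,∞), and let A, B be positive definite n×n complex matrices with s·A ≤ B ≤ t·A for some scalars 0 < s ≤ t with s·t ≥ 1. Then Φ(f(A ♯ B)) ≤ ((√s+√t)/2)·Φ(f(A ! B)). -/

import Mathlib

open Matrix ComplexOrder

/-- Loewner order: `A ≤ B` iff `B - A` is positive semidefinite. -/
def LoewnerLE {n : Type} [Fintype n] (A B : Matrix n n ℂ) : Prop := (B - A).PosSemidef

/-- The positive square root of a (Hermitian) matrix, via the continuous functional calculus. -/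
noncomputable def msqrt {n : Type} [Fintype n] [DecidableEq n] (A : Matrix n n ℂ) :
    Matrix n n ℂ := cfc Real.sqrt A

/-- The arithmetic mean `A ∇ B = (A + B)/2`. -/
noncomputable def amean {n : Type} [Fintype n] [DecidableEq n] (A B : Matrix n n ℂ) :
    Matrix n n ℂ := (2 : ℝ)⁻¹ • (A + B)

/-- The harmonic mean `A ! B = ((A⁻¹ + B⁻¹)/2)⁻¹`. -/
noncomputable def hmean {n : Type} [Fintype n] [DecidableEq n] (A B : Matrix n n ℂ) :
    Matrix n n ℂ := ((2 : ℝ)⁻¹ • (A⁻¹ + B⁻¹))⁻¹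

/-- The geometric mean `A ♯ B = A^(1/2) (A^(-1/2) B A^(-1/2))^(1/2) A^(1/2)`. -/
noncomputable def gmean {n : Type} [Fintype n] [DecidableEq n] (A B : Matrix n n ℂ) :
    Matrix n n ℂ := msqrt A * msqrt ((msqrt A)⁻¹ * B * (msqrt A)⁻¹) * msqrt A

/-- `f : ℝ → ℝ` is operator monotone on `[0,∞)`: it is continuous and nonnegative on `[0,∞)`
and monotone on positive-semidefinite complex matrices of every finite size, with `f` applied
via the continuous functional calculus. -/
def OpMonotone (f : ℝ → ℝ) : Prop :=
  ContinuousOn f (Set.Ici 0) ∧ (∀ x : ℝ, 0 ≤ x → 0 ≤ f x) ∧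
    ∀ (k : Type) [Fintype k] [DecidableEq k] (X Y : Matrix k k ℂ),
      X.PosSemidef → LoewnerLE X Y → LoewnerLE (cfc f X) (cfc f Y)

/-- `g : ℝ → ℝ` is operator monotone decreasing on `(0,∞)`: it is continuous and nonnegative on
`(0,∞)` and antitone on positive-definite complex matrices of every finite size, with `g` applied
via the continuous functional calculus. -/
def OpAntitone (g : ℝ → ℝ) : Prop :=
  ContinuousOn g (Set.Ioi 0) ∧ (∀ x : ℝ, 0 < x → 0 ≤ g x) ∧
    ∀ (k : Type) [Fintype k] [DecidableEq k] (X Y : Matrix k k ℂ),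
      X.PosDef → Y.PosDef → LoewnerLE X Y → LoewnerLE (cfc g Y) (cfc g X)

/-!
A mean of the form `A^(1/2) g(C) A^(1/2)` with `C = A^(-1/2) B A^(-1/2)` depends monotonically on
the values of `g` on the spectrum of `C`, which lies in `[s, t]`. Both means have this form, with
`g x = √x` and with `g x` the harmonic mean of `1` and `x`, so `A ♯ B ≤ K (A ! B)` for
`K = (√s + √t) / 2` reduces to `1 + x ≤ 2 K √x`, which holds because `(√x - √s) (√t - √x) ≥ 0` and
`√s √t ≥ 1`.

To move `K ≥ 1` through `f`, note that a nonnegative operator monotone function is concave. Indeed,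
with `Q` the projection onto a coordinate vector, applying `f` to the pinching inequality
`T ≤ (1 + c²) Q T Q + (1 + c⁻²) (1 - Q) T (1 - Q)` and letting `c → 0` gives `f(T)ᵢᵢ ≤ f(Tᵢᵢ)`;
then take for `T` a `2 × 2` matrix with eigenvalues `x` and `y`.
-/

open scoped MatrixOrder

section StarProjection

variable {R : Type*} [Ring R] [StarRing R] [Algebra ℝ R]

theorem cfc_smul_add_smul_one_sub_of_isStarProjection [TopologicalSpace R]
    [ContinuousFunctionalCalculus ℝ R IsSelfAdjoint] [ContinuousMap.UniqueHom ℝ R]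
    {p : R} (hp : IsStarProjection p) (f : ℝ → ℝ) (a b : ℝ) :
    cfc f (a • p + b • (1 - p)) = f a • p + f b • (1 - p) := by
  have hp_sa : IsSelfAdjoint p := hp.isSelfAdjoint
  have affine (u v : ℝ) : cfc (fun x ↦ u * x + v * (1 - x)) p = u • p + v • (1 - p) := by
    rw [cfc_add .., cfc_const_mul .., cfc_const_mul .., cfc_sub .., cfc_id' .., cfc_const_one ..]
  rw [← affine a b, ← cfc_comp' f _ p
    (((hp.isIdempotentElem.finite_spectrum ℝ).image _).continuousOn f), ← affine (f a) (f b)]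
  refine cfc_congr fun x hx ↦ ?_
  rcases hp.isIdempotentElem.spectrum_subset ℝ hx with rfl | rfl <;> simp

theorem le_smul_pinching [PartialOrder R] [StarOrderedRing R] [StarModule ℝ R] {T Q : R}
    (hT : 0 ≤ T) (hQ : IsSelfAdjoint Q) {c : ℝ} (hc : c ≠ 0) :
    T ≤ (1 + c ^ 2) • (Q * T * Q) + (1 + (c ^ 2)⁻¹) • ((1 - Q) * T * (1 - Q)) := by
  set S : R := c • Q - c⁻¹ • (1 - Q) with hS
  have hS_sa : IsSelfAdjoint S :=
    ((IsSelfAdjoint.all c).smul hQ).sub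
      ((IsSelfAdjoint.all c⁻¹).smul ((IsSelfAdjoint.one R).sub hQ))
  have square : S * T * S = (1 + c ^ 2) • (Q * T * Q)
      + (1 + (c ^ 2)⁻¹) • ((1 - Q) * T * (1 - Q)) - T := by
    simp only [hS, sub_mul, mul_sub, smul_sub, smul_mul_assoc, mul_smul_comm, mul_one, one_mul]
    match_scalars <;> field_simp <;> ring
  exact sub_nonneg.mp (square ▸ hS_sa.conjugate_nonneg hT)

end StarProjection

theorem mul_le_of_concaveOn_Ici {f : ℝ → ℝ} (hf : ConcaveOn ℝ (Set.Ici 0) f) (hf0 : 0 ≤ f 0)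
    {K x : ℝ} (hK : 1 ≤ K) (hx : 0 ≤ x) : f (K * x) ≤ K * f x := by
  have hK0 : 0 < K := by positivity
  have hK_inv : 0 ≤ 1 - K⁻¹ := sub_nonneg.2 (inv_le_one_of_one_le₀ hK)
  rw [← inv_mul_le_iff₀ hK0]
  calc K⁻¹ * f (K * x) ≤ K⁻¹ * f (K * x) + (1 - K⁻¹) * f 0 :=
        le_add_of_nonneg_right (mul_nonneg hK_inv hf0)
    _ ≤ f x := by
        simpa [hK0.ne'] using hf.2 (Set.mem_Ici.2 (by positivity : 0 ≤ K * x)) Set.self_mem_Ici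
          (inv_nonneg.2 hK0.le) hK_inv (by ring)

section RankOne

variable {n R : Type*} [Fintype n] [Semiring R] [StarRing R]

theorem isStarProjection_single [DecidableEq n] (i : n) :
    IsStarProjection (single i i (1 : R)) where
  isIdempotentElem := by simp [IsIdempotentElem]
  isSelfAdjoint := by simp [IsSelfAdjoint, star_eq_conjTranspose]

theorem isStarProjection_vecMulVec_star {v : n → R} (hv : star v ⬝ᵥ v = 1) :
    IsStarProjection (vecMulVec v (star v)) where
  isIdempotentElem := by simp [IsIdempotentElem, vecMulVec_mul_vecMulVec, hv]
  isSelfAdjoint := by simp [IsSelfAdjoint, star_eq_conjTranspose, conjTranspose_vecMulVec]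

end RankOne

theorem exists_le_smul_one_of_isHermitian {n : Type*} [Finite n] [DecidableEq n] {X : Matrix n n ℂ}
    (hX : X.IsHermitian) : ∃ r : ℝ, X ≤ r • 1 := by
  cases nonempty_fintype n
  obtain ⟨r, hr⟩ := X.finite_real_spectrum.bddAbove
  refine ⟨r, ?_⟩
  rw [← Algebra.algebraMap_eq_smul_one]
  exact le_algebraMap_of_spectrum_le (fun x hx ↦ hr hx) hX

namespace OpMonotone

variable {f : ℝ → ℝ} {k : Type} [Fintype k] [DecidableEq k]

theorem cfc_le_cfc (hf : OpMonotone f)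
    {X Y : Matrix k k ℂ} (hX : 0 ≤ X) (hXY : X ≤ Y) : cfc f X ≤ cfc f Y :=
  hf.2.2 k X Y (nonneg_iff_posSemidef.1 hX) hXY

theorem re_cfc_apply_self_le_of_ne_zero (hf : OpMonotone f) {X : Matrix k k ℂ} (hX : 0 ≤ X) (i : k)
    {c : ℝ} (hc : c ≠ 0) : (cfc f X i i).re ≤ f ((1 + c ^ 2) * (X i i).re) := by
  set Q : Matrix k k ℂ := single i i 1
  have hQ : IsStarProjection Q := isStarProjection_single i
  obtain ⟨r, hr⟩ := exists_le_smul_one_of_isHermitian (nonneg_iff_posSemidef.1 hX).1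
  have hQXQ : Q * X * Q = (X i i).re • Q := by
    have hXii : ((X i i).re : ℂ) = X i i := (nonneg_iff_posSemidef.1 hX).1.coe_re_apply_self i
    simp [Q, hXii]
  have hcompl : (1 - Q) * X * (1 - Q) ≤ r • (1 - Q) := by
    simpa [hQ.one_sub.isIdempotentElem.eq] using hQ.one_sub.isSelfAdjoint.conjugate_le_conjugate hr
  have hXQ : X ≤ ((1 + c ^ 2) * (X i i).re) • Q + ((1 + (c ^ 2)⁻¹) * r) • (1 - Q) := by
    rw [mul_smul, mul_smul, ← hQXQ]
    grw [← hcompl]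
    exact le_smul_pinching hX hQ.isSelfAdjoint hc
  have hdiag := (hf.cfc_le_cfc hX hXQ).diag_nonneg (i := i)
  rw [cfc_smul_add_smul_one_sub_of_isStarProjection hQ] at hdiag
  simpa [Q] using (Complex.le_def.1 hdiag).1

theorem re_cfc_apply_self_le (hf : OpMonotone f) {X : Matrix k k ℂ} (hX : 0 ≤ X) (i : k) :
    (cfc f X i i).re ≤ f (X i i).re := by
  have hXii : 0 ≤ (X i i).re := (Complex.le_def.1 (nonneg_iff_posSemidef.1 hX).diag_nonneg).1
  have hcont : Continuous fun c : ℝ ↦ f ((1 + c ^ 2) * (X i i).re) :=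
    hf.1.comp_continuous (by fun_prop) fun c ↦ mul_nonneg (by positivity) hXii
  have hlim := hcont.continuousWithinAt (s := {0}ᶜ) (x := 0) |>.tendsto
  simp only [ne_eq, OfNat.ofNat_ne_zero, not_false_eq_true, zero_pow, add_zero, one_mul] at hlim
  exact ge_of_tendsto hlim
    (eventually_mem_nhdsWithin.mono fun c hc ↦ hf.re_cfc_apply_self_le_of_ne_zero hX i hc)

theorem concaveOn (hf : OpMonotone f) : ConcaveOn ℝ (Set.Ici 0) f := by
  refine ⟨convex_Ici 0, fun x hx y hy a b ha hb hab ↦ ?_⟩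
  set v : Fin 2 → ℂ := ![√a, √b]
  set P := vecMulVec v (star v)
  have hP : IsStarProjection P := isStarProjection_vecMulVec_star <| by
    simp [v, dotProduct, ← Complex.ofReal_mul, ← Complex.ofReal_add, ha, hb, hab]
  have hP00 : P 0 0 = a := by simp [P, v, ← Complex.ofReal_mul, ha]
  have hentry (u w : ℝ) : ((u • P + w • (1 - P)) 0 0).re = a * u + b * w := by
    simp [hP00, ← eq_sub_iff_add_eq'.2 hab, mul_comm]
  have hT : 0 ≤ x • P + y • (1 - P) :=
    add_nonneg (smul_nonneg hx hP.nonneg) (smul_nonneg hy hP.one_sub.nonneg)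
  have hjensen := hf.re_cfc_apply_self_le hT 0
  rwa [cfc_smul_add_smul_one_sub_of_isStarProjection hP, hentry, hentry] at hjensen

theorem cfc_smul_le (hf : OpMonotone f)
    {X : Matrix k k ℂ} (hX : 0 ≤ X) {K : ℝ} (hK : 1 ≤ K) : cfc f (K • X) ≤ K • cfc f X := by
  have hX_sa : IsSelfAdjoint X := .of_nonneg hX
  have hcont (g : ℝ → ℝ) := X.finite_real_spectrum.continuousOn g
  rw [← cfc_comp_const_mul K f X ((X.finite_real_spectrum.image _).continuousOn _),
    ← cfc_const_mul K f X (hcont f)]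
  exact cfc_mono (fun x hx ↦ mul_le_of_concaveOn_Ici hf.concaveOn (hf.2.1 0 le_rfl) hK
    (spectrum_nonneg_of_nonneg hX hx)) (hcont _) (hcont _)

end OpMonotone

section Mean

variable {n : Type} [Fintype n] [DecidableEq n] {A B : Matrix n n ℂ}

theorem isSelfAdjoint_msqrt (A : Matrix n n ℂ) : IsSelfAdjoint (msqrt A) :=
  cfc_predicate Real.sqrt A

theorem isSelfAdjoint_inv_msqrt (A : Matrix n n ℂ) : IsSelfAdjoint (msqrt A)⁻¹ :=
  IsHermitian.inv (isSelfAdjoint_msqrt A)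

theorem isStrictlyPositive_msqrt (hA : A.PosDef) : IsStrictlyPositive (msqrt A) := by
  have hA_sa : IsSelfAdjoint A := hA.1
  rw [msqrt, cfc_isStrictlyPositive_iff Real.sqrt A]
  exact fun x hx ↦ Real.sqrt_pos.2 (hA.isStrictlyPositive.spectrum_pos hx)

theorem isUnit_det_msqrt (hA : A.PosDef) : IsUnit (msqrt A).det :=
  (isUnit_iff_isUnit_det _).1 (isStrictlyPositive_msqrt hA).isUnit

theorem msqrt_mul_msqrt (hA : 0 ≤ A) : msqrt A * msqrt A = A := by
  have hA_sa : IsSelfAdjoint A := .of_nonneg hA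
  rw [msqrt, ← cfc_mul Real.sqrt Real.sqrt A]
  conv_rhs => rw [← cfc_id' ℝ A]
  exact cfc_congr fun x hx ↦ Real.mul_self_sqrt (spectrum_nonneg_of_nonneg hA hx)

theorem inv_msqrt_mul_mul_inv_msqrt (hA : A.PosDef) : (msqrt A)⁻¹ * A * (msqrt A)⁻¹ = 1 := by
  have hdet := isUnit_det_msqrt hA
  conv_lhs => enter [1, 2]; rw [← msqrt_mul_msqrt hA.posSemidef.nonneg]
  rw [nonsing_inv_mul_cancel_left _ _ hdet, mul_nonsing_inv _ hdet]

theorem inv_cfc (hA : A.IsHermitian) {g : ℝ → ℝ} (hg : ∀ x ∈ spectrum ℝ A, g x ≠ 0) :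
    (cfc g A)⁻¹ = cfc (fun x ↦ (g x)⁻¹) A :=
  (nonsing_inv_eq_ringInverse _).trans
    (cfc_inv g A hg (A.finite_real_spectrum.continuousOn g) hA).symm

/-- The operator perspective `A^(1/2) g(A^(-1/2) B A^(-1/2)) A^(1/2)`; for `g` operator monotone
with `g 1 = 1` it is the Kubo–Ando mean of `A` and `B` with representing function `g`. -/
noncomputable def opPerspective (g : ℝ → ℝ) (A B : Matrix n n ℂ) : Matrix n n ℂ :=
  msqrt A * cfc g ((msqrt A)⁻¹ * B * (msqrt A)⁻¹) * msqrt A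

theorem opPerspective_mono {g h : ℝ → ℝ}
    (hgh : ∀ x ∈ spectrum ℝ ((msqrt A)⁻¹ * B * (msqrt A)⁻¹), g x ≤ h x) :
    opPerspective g A B ≤ opPerspective h A B :=
  (isSelfAdjoint_msqrt A).conjugate_le_conjugate <|
    cfc_mono hgh (finite_real_spectrum.continuousOn g) (finite_real_spectrum.continuousOn h)

theorem opPerspective_nonneg {g : ℝ → ℝ}
    (hg : ∀ x ∈ spectrum ℝ ((msqrt A)⁻¹ * B * (msqrt A)⁻¹), 0 ≤ g x) :
    0 ≤ opPerspective g A B :=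
  (isSelfAdjoint_msqrt A).conjugate_nonneg (cfc_nonneg hg)

theorem opPerspective_const_mul (K : ℝ) (g : ℝ → ℝ) (A B : Matrix n n ℂ) :
    opPerspective (fun x ↦ K * g x) A B = K • opPerspective g A B := by
  rw [opPerspective, cfc_const_mul K g _ (finite_real_spectrum.continuousOn g), mul_smul_comm,
    smul_mul_assoc, opPerspective]

theorem gmean_eq_opPerspective (A B : Matrix n n ℂ) : gmean A B = opPerspective Real.sqrt A B :=
  rfl

theorem posDef_inv_msqrt_conj (hA : A.PosDef) (hB : B.PosDef) :
    ((msqrt A)⁻¹ * B * (msqrt A)⁻¹).PosDef := by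
  have hR := isUnit_nonsing_inv_iff.2 (isStrictlyPositive_msqrt hA).isUnit
  simpa [(isSelfAdjoint_inv_msqrt A).star_eq, mul_assoc] using
    (hR.posDef_star_left_conjugate_iff (x := B)).2 hB

theorem hmean_eq_opPerspective (hA : A.PosDef) (hB : B.PosDef) :
    hmean A B = opPerspective (fun x ↦ (2⁻¹ * (1 + x⁻¹))⁻¹) A B := by
  set R := msqrt A with hR
  set C := R⁻¹ * B * R⁻¹ with hC
  have hC_pos : C.PosDef := posDef_inv_msqrt_conj hA hB
  have hC_sa : IsSelfAdjoint C := hC_pos.1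
  have hspec : ∀ x ∈ spectrum ℝ C, 0 < x := fun x hx ↦ hC_pos.isStrictlyPositive.spectrum_pos hx
  have hcont (g : ℝ → ℝ) : ContinuousOn g (spectrum ℝ C) := C.finite_real_spectrum.continuousOn g
  have hR_unit : IsUnit R.det := isUnit_det_msqrt hA
  have hA_inv : A⁻¹ = R⁻¹ * R⁻¹ := by
    rw [← Matrix.mul_inv_rev, hR, msqrt_mul_msqrt hA.posSemidef.nonneg]
  have hB_inv : B⁻¹ = R⁻¹ * C⁻¹ * R⁻¹ := by
    have hRCR : R * C * R = B := by
      simp only [hC, mul_assoc, mul_nonsing_inv_cancel_left _ _ hR_unit,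
        nonsing_inv_mul _ hR_unit, mul_one]
    rw [← hRCR, Matrix.mul_inv_rev, Matrix.mul_inv_rev, mul_assoc]
  have hC_inv : (2⁻¹ : ℝ) • (1 + C⁻¹) = cfc (fun x : ℝ ↦ 2⁻¹ * (1 + x⁻¹)) C := by
    rw [cfc_const_mul _ _ _ (hcont _), cfc_add _ _ _ (hcont _) (hcont _), cfc_const_one ..,
      ← inv_cfc hC_pos.1 fun x hx ↦ (hspec x hx).ne', cfc_id' ..]
  calc hmean A B = (R⁻¹ * ((2⁻¹ : ℝ) • (1 + C⁻¹)) * R⁻¹)⁻¹ := by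
        rw [hmean, hA_inv, hB_inv, mul_smul_comm, smul_mul_assoc, mul_add, add_mul, mul_one]
    _ = R * (cfc (fun x : ℝ ↦ 2⁻¹ * (1 + x⁻¹)) C)⁻¹ * R := by
        rw [hC_inv, Matrix.mul_inv_rev, Matrix.mul_inv_rev, nonsing_inv_nonsing_inv R hR_unit,
          mul_assoc]
    _ = R * cfc (fun x : ℝ ↦ (2⁻¹ * (1 + x⁻¹))⁻¹) C * R := by
        rw [inv_cfc hC_pos.1 fun x hx ↦ by have := hspec x hx; positivity]

theorem spectrum_subset_Icc_of_smul_le (hA : A.PosDef) {s t : ℝ} (hsA : s • A ≤ B)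
    (htA : B ≤ t • A) : spectrum ℝ ((msqrt A)⁻¹ * B * (msqrt A)⁻¹) ⊆ Set.Icc s t := by
  have hconj (r : ℝ) : (msqrt A)⁻¹ * (r • A) * (msqrt A)⁻¹ = algebraMap ℝ _ r := by
    rw [mul_smul_comm, smul_mul_assoc, inv_msqrt_mul_mul_inv_msqrt hA,
      Algebra.algebraMap_eq_smul_one]
  have hsC := (isSelfAdjoint_inv_msqrt A).conjugate_le_conjugate hsA
  have htC := (isSelfAdjoint_inv_msqrt A).conjugate_le_conjugate htA
  rw [hconj] at hsC htC
  have hC_sa : IsSelfAdjoint ((msqrt A)⁻¹ * B * (msqrt A)⁻¹) := by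
    simpa using
      (IsSelfAdjoint.algebraMap _ (.all s)).add (IsSelfAdjoint.of_nonneg (sub_nonneg.2 hsC))
  exact fun x hx ↦ ⟨(algebraMap_le_iff_le_spectrum hC_sa).1 hsC x hx,
    (le_algebraMap_iff_spectrum_le hC_sa).1 htC x hx⟩

end Mean

theorem one_le_sqrt_mul_sqrt {s t : ℝ} (hs : 0 ≤ s) (hst : 1 ≤ s * t) : 1 ≤ √s * √t := by
  rwa [← Real.sqrt_mul hs, Real.one_le_sqrt]

theorem one_le_sqrt_add_sqrt_div_two {s t : ℝ} (hs : 0 ≤ s) (hst : 1 ≤ s * t) :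
    1 ≤ (√s + √t) / 2 := by
  nlinarith [one_le_sqrt_mul_sqrt hs hst, sq_nonneg (√s - √t), Real.sqrt_nonneg s,
    Real.sqrt_nonneg t]

theorem sqrt_le_mul_harmonic {s t x : ℝ} (hs : 0 < s) (hst : 1 ≤ s * t) (hx : x ∈ Set.Icc s t) :
    √x ≤ (√s + √t) / 2 * (2⁻¹ * (1 + x⁻¹))⁻¹ := by
  have hx0 : 0 < x := hs.trans_le hx.1
  have hmul : 1 ≤ √s * √t := one_le_sqrt_mul_sqrt hs.le hst
  have hquad : 0 ≤ (√x - √s) * (√t - √x) :=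
    mul_nonneg (sub_nonneg.2 (Real.sqrt_le_sqrt hx.1)) (sub_nonneg.2 (Real.sqrt_le_sqrt hx.2))
  rw [le_mul_inv_iff₀ (by positivity)]
  calc √x * (2⁻¹ * (1 + x⁻¹)) = (1 + √x ^ 2) / (2 * √x) := by
        nth_rw 2 [← Real.sq_sqrt hx0.le]
        field_simp
        ring
    _ ≤ (√s + √t) / 2 := by
        rw [div_le_iff₀ (by positivity)]
        linarith

theorem posDef_of_smul_le {n : Type*} {A B : Matrix n n ℂ} {s : ℝ} (hA : A.PosDef) (hs : 0 < s)
    (hsA : s • A ≤ B) : B.PosDef := by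
  simpa using (hA.smul hs).add_posSemidef (le_iff.1 hsA)

section Main

variable {n : Type} [Fintype n] [DecidableEq n] {A B : Matrix n n ℂ} {s t : ℝ}

theorem posDef_hmean (hA : A.PosDef) (hB : B.PosDef) : (hmean A B).PosDef :=
  ((hA.inv.add hB.inv).smul (by norm_num : (0 : ℝ) < 2⁻¹)).inv

theorem gmean_le_smul_hmean (hA : A.PosDef) (hs : 0 < s) (hst : 1 ≤ s * t) (hsA : s • A ≤ B)
    (htA : B ≤ t • A) : gmean A B ≤ ((√s + √t) / 2) • hmean A B := by
  rw [gmean_eq_opPerspective, hmean_eq_opPerspective hA (posDef_of_smul_le hA hs hsA),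
    ← opPerspective_const_mul]
  exact opPerspective_mono fun x hx ↦
    sqrt_le_mul_harmonic hs hst (spectrum_subset_Icc_of_smul_le hA hsA htA hx)

theorem geom_le_harm_after_map_general {E : Type*} [AddCommMonoid E] [PartialOrder E] [Module ℝ E]
    (Φ : Matrix n n ℂ →ₚ[ℝ] E) {f : ℝ → ℝ} (hf : OpMonotone f) (hA : A.PosDef)
    (hs : 0 < s) (hst : 1 ≤ s * t) (hsA : s • A ≤ B) (htA : B ≤ t • A) :
    Φ (cfc f (gmean A B)) ≤ ((√s + √t) / 2) • Φ (cfc f (hmean A B)) := by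
  have hG : 0 ≤ gmean A B := opPerspective_nonneg fun x _ ↦ Real.sqrt_nonneg x
  have hH : 0 ≤ hmean A B := (posDef_hmean hA (posDef_of_smul_le hA hs hsA)).posSemidef.nonneg
  rw [← map_smul]
  gcongr
  exact (hf.cfc_le_cfc hG (gmean_le_smul_hmean hA hs hst hsA htA)).trans
    (hf.cfc_smul_le hH (one_le_sqrt_add_sqrt_div_two hs.le hst))

end Main

theorem geom_le_harm_after_map {n m : Type} [Fintype n] [DecidableEq n] [Fintype m] [DecidableEq m]
    (Φ : Matrix n n ℂ →ₗ[ℂ] Matrix m m ℂ)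
    (hΦ : ∀ X : Matrix n n ℂ, X.PosSemidef → (Φ X).PosSemidef)
    (f : ℝ → ℝ) (hf : OpMonotone f)
    (A B : Matrix n n ℂ) (hA : A.PosDef) (hB : B.PosDef)
    (s t : ℝ) (hs : 0 < s) (hst : s ≤ t) (h1 : 1 ≤ s * t)
    (hsA : LoewnerLE (s • A) B) (htA : LoewnerLE B (t • A)) :
    LoewnerLE (Φ (cfc f (gmean A B)))
      (((Real.sqrt s + Real.sqrt t) / 2) • Φ (cfc f (hmean A B))) :=
  geom_le_harm_after_map_general (.mk₀ (Φ.restrictScalars ℝ) fun X hX ↦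
    nonneg_iff_posSemidef.2 (hΦ X (nonneg_iff_posSemidef.1 hX))) hf hA hs h1 hsA htA
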